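/- Suppose F ∈ D(Λ), i.e. its quantile function Q satisfies de Haan's criterion. Then for each fixed β > 0 the function s ↦ c(s, β) is slowly varying at zero: for every λ > 0, c(λs, β)/c(s, β) → 1 as s ↓ 0. -/

import Mathlib

open MeasureTheory Filter Set

noncomputable section

/-- The distribution function of a measure on `ℝ`. -/
def distFun (μ : Measure ℝ) : ℝ → ℝ := fun x => (μ (Set.Iic x)).toReal

/-- The quantile (left-continuous inverse) function of a distribution function. -/
def quantileFun (F : ℝ → ℝ) : ℝ → ℝ := fun s => sInf {x : ℝ | s ≤ F x}

/-- de Haan's criterion for the Gumbel domain of attraction, in terms of the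
quantile function `Q`. -/
def DeHaanGumbel (Q : ℝ → ℝ) : Prop :=
  ∀ x y z w : ℝ, 0 < x → 0 < y → 0 < z → 0 < w → y ≠ w →
    Tendsto (fun s : ℝ => (Q (1 - s * x) - Q (1 - s * z)) / (Q (1 - s * y) - Q (1 - s * w)))
      (nhdsWithin 0 (Set.Ioi 0))
      (nhds ((Real.log x - Real.log z) / (Real.log y - Real.log w)))

/-- The Lebesgue–Stieltjes measure `dQ` on `(0,1)` associated with the quantile function of
`F`: it coincides with the pushforward of Lebesgue measure under `F`
(for an interval `(a,b] ⊆ (0,1)` it has mass `Q(b+) - Q(a+)`). -/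
def dQ (μ : Measure ℝ) : Measure ℝ := Measure.map (distFun μ) volume

/-- `c(s,β) = s^{-β} ∫_{(1-s,1)} (1-u)^β dQ(u)`. -/
def cBeta (μ : Measure ℝ) (s β : ℝ) : ℝ :=
  s ^ (-β) * ∫ u in Set.Ioo (1 - s) 1, (1 - u) ^ β ∂(dQ μ)

/-- `c(s) = c(s,1) = s⁻¹ ∫_{(1-s,1)} (1-u) dQ(u)`. -/
def cFun (μ : Measure ℝ) (s : ℝ) : ℝ := cBeta μ s 1

/-- `σ²(s) = ∫_{(1-s,1)} ∫_{(1-s,1)} (min(u,v) - uv) dQ(u) dQ(v)`. -/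
def sigmaSq (μ : Measure ℝ) (s : ℝ) : ℝ :=
  ∫ v in Set.Ioo (1 - s) 1, (∫ u in Set.Ioo (1 - s) 1, (min u v - u * v) ∂(dQ μ)) ∂(dQ μ)

/-- A function is slowly varying at zero if `L(λ s)/L(s) → 1` as `s ↓ 0` for every `λ > 0`. -/
def SlowlyVaryingAtZero (L : ℝ → ℝ) : Prop :=
  ∀ lam : ℝ, 0 < lam →
    Tendsto (fun s : ℝ => L (lam * s) / L s) (nhdsWithin 0 (Set.Ioi 0)) (nhds 1)

/-- Condition (K) on the sequence of integers `k n`. -/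
def CondK (k : ℕ → ℕ) : Prop :=
  (∀ n : ℕ, 1 ≤ k n ∧ k n ≤ n) ∧ Tendsto k atTop atTop ∧
    Tendsto (fun n : ℕ => (k n : ℝ) / (n : ℝ)) atTop (nhds 0)

/-!
Read from the endpoint `1`, the measure `dQ` becomes a measure `ν` near `0` with
`ν (a, b] = Q (1 - a) - Q (1 - b)`, and `c(s, β)` is its truncated moment
`s ^ (-β) * ∫_{(0, s)} v ^ β dν`. De Haan's criterion says that, near `0`, the interval `(q r, r]`
has asymptotically the same `ν`-mass as its dilate by any `lam > 0`. Cut `(0, t]`, `t < s`, along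
the geometric sequence `q ^ k * t`: on each piece `v ^ β` is constant up to the factor `q ^ β`, so
the moment at `s` of the image of `ν` under `v ↦ lam⁻¹ * v` is at most `(1 + ε) * q ^ (-β)` times
that of `ν`. The moment of this image at `s` is the moment of `ν` at `lam * s`, so letting `q → 1`
and `ε → 0` gives `limsup c(lam * s, β) / c(s, β) ≤ 1`; replacing `lam` by `lam⁻¹` gives the
matching lower bound.
-/

open scoped ENNReal Function Topology

section SlowVariation

theorem slowlyVaryingAtZero_of_eventually_le {L : ℝ → ℝ} (hpos : ∀ᶠ s in 𝓝[>] 0, 0 < L s)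
    (hle : ∀ lam > 0, ∀ C > 1, ∀ᶠ s in 𝓝[>] 0, L (lam * s) ≤ C * L s) :
    SlowlyVaryingAtZero L := by
  intro lam hlam
  refine tendsto_order.2 ⟨fun a ha => ?_, fun b hb => ?_⟩
  · obtain ⟨c, hc, hc1⟩ := exists_between (max_lt ha one_pos)
    obtain ⟨hac, hc0⟩ := max_lt_iff.1 hc
    -- The lower bound at `lam` is the upper bound at `lam⁻¹`, applied at the point `lam * s`.
    have hback := eventually_nhdsGT_zero_mul_left hlam
      (hle lam⁻¹ (inv_pos.2 hlam) c⁻¹ ((one_lt_inv₀ hc0).2 hc1))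
    filter_upwards [hpos, hback] with s hs hLs
    rw [inv_mul_cancel_left₀ hlam.ne', inv_mul_eq_div, le_div_iff₀' hc0] at hLs
    exact hac.trans_le ((le_div_iff₀ hs).2 hLs)
  · obtain ⟨C, hC, hCb⟩ := exists_between hb
    filter_upwards [hpos, hle lam hlam C hC] with s hs hLs
    exact ((div_le_iff₀ hs).2 hLs).trans_lt hCb

end SlowVariation

section GeometricComparison

theorem iUnion_Ioc_pow_mul {q s : ℝ} (hq0 : 0 < q) (hq1 : q < 1) (hs : 0 < s) :
    ⋃ k : ℕ, Ioc (q * (q ^ k * s)) (q ^ k * s) = Ioc 0 s := by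
  ext v
  simp only [mem_iUnion, mem_Ioc]
  constructor
  · rintro ⟨k, hlt, hle⟩
    exact ⟨lt_trans (by positivity) hlt,
      hle.trans (mul_le_of_le_one_left hs.le (pow_le_one₀ hq0.le hq1.le))⟩
  · rintro ⟨hv, hvs⟩
    obtain ⟨k, hlt, hle⟩ :=
      exists_nat_pow_near_of_lt_one (div_pos hv hs) ((div_le_one hs).2 hvs) hq0 hq1
    rw [lt_div_iff₀ hs, pow_succ', mul_assoc] at hlt
    exact ⟨k, hlt, (div_le_iff₀ hs).1 hle⟩

theorem pairwise_disjoint_Ioc_pow_mul {q s : ℝ} (hq0 : 0 ≤ q) (hq1 : q ≤ 1) (hs : 0 ≤ s) :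
    Pairwise (Disjoint on fun k : ℕ => Ioc (q * (q ^ k * s)) (q ^ k * s)) := by
  have hanti : Antitone fun k : ℕ => q ^ k * s := fun i j hij =>
    mul_le_mul_of_nonneg_right (pow_le_pow_of_le_one hq0 hq1 hij) hs
  simpa only [Nat.succ_eq_succ, pow_succ', mul_assoc] using hanti.pairwise_disjoint_on_Ioc_succ

variable {m₁ m₂ : Measure ℝ} {f : ℝ → ℝ≥0∞} {q s : ℝ} {K C : ℝ≥0∞}

theorem mul_setLIntegral_Ioc_le_of_measure_le (hq : 0 < q) (hs : 0 < s)
    (hf : MonotoneOn f (Ioi 0)) (hfq : K * f s ≤ f (q * s))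
    (hm : m₁ (Ioc (q * s) s) ≤ C * m₂ (Ioc (q * s) s)) :
    K * ∫⁻ v in Ioc (q * s) s, f v ∂m₁ ≤ C * ∫⁻ v in Ioc (q * s) s, f v ∂m₂ := by
  have hqs : 0 < q * s := mul_pos hq hs
  calc K * ∫⁻ v in Ioc (q * s) s, f v ∂m₁
      ≤ K * ∫⁻ _ in Ioc (q * s) s, f s ∂m₁ := by
        gcongr K * ?_
        exact setLIntegral_mono' measurableSet_Ioc fun v hv => hf (hqs.trans hv.1) hs hv.2
    _ = K * f s * m₁ (Ioc (q * s) s) := by rw [setLIntegral_const, mul_assoc]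
    _ ≤ f (q * s) * (C * m₂ (Ioc (q * s) s)) := by gcongr
    _ = C * ∫⁻ _ in Ioc (q * s) s, f (q * s) ∂m₂ := by rw [setLIntegral_const, mul_left_comm]
    _ ≤ C * ∫⁻ v in Ioc (q * s) s, f v ∂m₂ := by
        gcongr C * ?_
        exact setLIntegral_mono' measurableSet_Ioc fun v hv => hf hqs (hqs.trans hv.1) hv.1.le

theorem mul_setLIntegral_Ioc_zero_le_of_forall_measure_le (hq0 : 0 < q) (hq1 : q < 1) (hs : 0 < s)
    (hf : MonotoneOn f (Ioi 0)) (hfq : ∀ r > 0, K * f r ≤ f (q * r))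
    (hm : ∀ r ∈ Ioc 0 s, m₁ (Ioc (q * r) r) ≤ C * m₂ (Ioc (q * r) r)) :
    K * ∫⁻ v in Ioc 0 s, f v ∂m₁ ≤ C * ∫⁻ v in Ioc 0 s, f v ∂m₂ := by
  have hdisj := pairwise_disjoint_Ioc_pow_mul hq0.le hq1.le hs.le
  rw [← iUnion_Ioc_pow_mul hq0 hq1 hs, lintegral_iUnion (fun _ => measurableSet_Ioc) hdisj,
    lintegral_iUnion (fun _ => measurableSet_Ioc) hdisj, ← ENNReal.tsum_mul_left,
    ← ENNReal.tsum_mul_left]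
  refine ENNReal.tsum_le_tsum fun k => ?_
  have hk : 0 < q ^ k * s := by positivity
  have hks : q ^ k * s ≤ s := mul_le_of_le_one_left hs.le (pow_le_one₀ hq0.le hq1.le)
  exact mul_setLIntegral_Ioc_le_of_measure_le hq0 hk hf (hfq _ hk) (hm _ ⟨hk, hks⟩)

theorem mul_setLIntegral_Ioo_zero_le_of_forall_measure_le (hq0 : 0 < q) (hq1 : q < 1)
    (hf : MonotoneOn f (Ioi 0)) (hfq : ∀ r > 0, K * f r ≤ f (q * r))
    (hm : ∀ r ∈ Ioo 0 s, m₁ (Ioc (q * r) r) ≤ C * m₂ (Ioc (q * r) r)) :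
    K * ∫⁻ v in Ioo 0 s, f v ∂m₁ ≤ C * ∫⁻ v in Ioo 0 s, f v ∂m₂ := by
  rcases le_or_gt s 0 with hs | hs
  · simp [Ioo_eq_empty_of_le hs]
  obtain ⟨t, ht_mono, ht_mem, ht_lim⟩ := exists_seq_strictMono_tendsto' hs
  have hunion : ⋃ n, Ioc 0 (t n) = Ioo 0 s := by
    simp_rw [← Ioi_inter_Iic, ← inter_iUnion,
      iUnion_Iic_eq_Iio_of_lt_of_tendsto (fun n => (ht_mem n).2) ht_lim, Ioi_inter_Iio]
  have hdir : Directed (· ⊆ ·) fun n => Ioc 0 (t n) :=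
    Monotone.directed_le fun i j hij => Ioc_subset_Ioc_right (ht_mono.monotone hij)
  nth_rw 1 [← hunion]
  rw [setLIntegral_iUnion_of_directed f hdir, ENNReal.mul_iSup]
  refine iSup_le fun n => ?_
  calc K * ∫⁻ v in Ioc 0 (t n), f v ∂m₁
      ≤ C * ∫⁻ v in Ioc 0 (t n), f v ∂m₂ :=
        mul_setLIntegral_Ioc_zero_le_of_forall_measure_le hq0 hq1 (ht_mem n).1 hf hfq fun r hr =>
          hm r ⟨hr.1, hr.2.trans_lt (ht_mem n).2⟩
    _ ≤ C * ∫⁻ v in Ioo 0 s, f v ∂m₂ := by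
        gcongr C * ?_
        exact lintegral_mono_set (Ioc_subset_Ioo_right (ht_mem n).2)

end GeometricComparison

/-- The truncated moment `∫_{(0, s)} v ^ β dν` of a measure at the origin, normalised by the
power `s ^ (-β)` that makes it invariant under a simultaneous dilation of `ν` and `s`. -/
def normalizedMoment (ν : Measure ℝ) (β s : ℝ) : ℝ :=
  s ^ (-β) * ∫ v in Ioo 0 s, v ^ β ∂ν

section NormalizedMoment

variable {ν m₁ m₂ : Measure ℝ} {β s : ℝ}

theorem normalizedMoment_pos (hs : 0 < s) (hint : IntegrableOn (fun v : ℝ => v ^ β) (Ioo 0 s) ν)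
    (hν : ν (Ioo 0 s) ≠ 0) : 0 < normalizedMoment ν β s := by
  have hpow : ∀ v ∈ Ioo 0 s, 0 < v ^ β := fun v hv => Real.rpow_pos_of_pos hv.1 β
  refine mul_pos (Real.rpow_pos_of_pos hs _) ?_
  rw [setIntegral_pos_iff_support_of_nonneg_ae
    (ae_restrict_of_forall_mem measurableSet_Ioo fun v hv => (hpow v hv).le) hint,
    inter_eq_right.2 fun v hv => Function.mem_support.2 (hpow v hv).ne']
  exact pos_iff_ne_zero.2 hν

theorem normalizedMoment_const_mul (hs : 0 < s) {lam : ℝ} (hlam : 0 < lam) :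
    normalizedMoment ν β (lam * s) = normalizedMoment (ν.map (lam⁻¹ * ·)) β s := by
  have hdilate : ∫ v in Ioo 0 s, v ^ β ∂ν.map (lam⁻¹ * ·)
      = lam ^ (-β) * ∫ v in Ioo 0 (lam * s), v ^ β ∂ν := by
    rw [(measurableEmbedding_mulLeft₀ (inv_ne_zero hlam.ne')).setIntegral_map,
      preimage_const_mul_Ioo₀ _ _ (inv_pos.2 hlam), zero_div, div_inv_eq_mul, mul_comm s,
      ← integral_const_mul]
    refine setIntegral_congr_fun measurableSet_Ioo fun v hv => ?_
    rw [Real.mul_rpow (inv_pos.2 hlam).le hv.1.le, Real.inv_rpow hlam.le, Real.rpow_neg hlam.le]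
  rw [normalizedMoment, normalizedMoment, hdilate, Real.mul_rpow hlam.le hs.le]
  ring

theorem setIntegral_rpow_Ioo_eq_toReal :
    ∫ v in Ioo 0 s, v ^ β ∂ν = (∫⁻ v in Ioo 0 s, ENNReal.ofReal (v ^ β) ∂ν).toReal :=
  integral_eq_lintegral_of_nonneg_ae
    (ae_restrict_of_forall_mem measurableSet_Ioo fun _ hv => Real.rpow_nonneg hv.1.le β)
    (by fun_prop)

theorem rpow_mul_normalizedMoment_le {q C : ℝ} (hβ : 0 ≤ β) (hq0 : 0 < q) (hq1 : q < 1)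
    (hs : 0 < s) (hC : 0 ≤ C) (hint : IntegrableOn (fun v : ℝ => v ^ β) (Ioo 0 s) m₂)
    (hm : ∀ r ∈ Ioo 0 s, m₁ (Ioc (q * r) r) ≤ ENNReal.ofReal C * m₂ (Ioc (q * r) r)) :
    q ^ β * normalizedMoment m₁ β s ≤ C * normalizedMoment m₂ β s := by
  have hmono : MonotoneOn (fun v : ℝ => ENNReal.ofReal (v ^ β)) (Ioi 0) := fun v hv w _ hvw =>
    ENNReal.ofReal_le_ofReal (Real.rpow_le_rpow (le_of_lt hv) hvw hβ)
  have hscale : ∀ r > 0, ENNReal.ofReal (q ^ β) * ENNReal.ofReal (r ^ β)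
      ≤ ENNReal.ofReal ((q * r) ^ β) := fun r hr => by
    rw [← ENNReal.ofReal_mul (by positivity), Real.mul_rpow hq0.le (le_of_lt hr)]
  have hmoment : q ^ β * ∫ v in Ioo 0 s, v ^ β ∂m₁ ≤ C * ∫ v in Ioo 0 s, v ^ β ∂m₂ := by
    have hcompare := ENNReal.toReal_mono
      (ENNReal.mul_ne_top ENNReal.ofReal_ne_top hint.lintegral_lt_top.ne)
      (mul_setLIntegral_Ioo_zero_le_of_forall_measure_le hq0 hq1 hmono hscale hm)
    rwa [ENNReal.toReal_mul, ENNReal.toReal_mul, ENNReal.toReal_ofReal (by positivity),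
      ENNReal.toReal_ofReal hC, ← setIntegral_rpow_Ioo_eq_toReal,
      ← setIntegral_rpow_Ioo_eq_toReal] at hcompare
  rw [normalizedMoment, normalizedMoment, mul_left_comm, mul_left_comm C]
  gcongr

end NormalizedMoment

/-- Asymptotic scale invariance of a measure at `0+`: an interval `(q r, r]` and its dilate by
`lam` have asymptotically equal masses as `r ↓ 0`. Since `Measure.real` is `0` on sets of infinite
measure and `x / 0 = 0`, the limit forces these masses to be eventually positive and finite. -/
def AsympScaleInvariant (ν : Measure ℝ) : Prop :=
  ∀ q ∈ Ioo (0 : ℝ) 1, ∀ lam > 0,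
    Tendsto (fun r : ℝ => ν.real (Ioc (q * (lam * r)) (lam * r)) / ν.real (Ioc (q * r) r))
      (𝓝[>] 0) (𝓝 1)

namespace AsympScaleInvariant

variable {ν : Measure ℝ} {q lam β : ℝ}

theorem eventually_measure_Ioo_ne_zero (h : AsympScaleInvariant ν) :
    ∀ᶠ s in 𝓝[>] 0, ν (Ioo 0 s) ≠ 0 := by
  have hlim := h 2⁻¹ ⟨by norm_num, by norm_num⟩ 2⁻¹ (by norm_num)
  filter_upwards [hlim.eventually_ne one_ne_zero, self_mem_nhdsWithin] with s hne hs
  have hs0 : 0 < s := hs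
  have hpiece : ν (Ioc (2⁻¹ * (2⁻¹ * s)) (2⁻¹ * s)) ≠ 0 :=
    (ENNReal.toReal_ne_zero.1 (div_ne_zero_iff.1 hne).1).1
  have hsub : Ioc (2⁻¹ * (2⁻¹ * s)) (2⁻¹ * s) ⊆ Ioo 0 s := fun v hv =>
    ⟨lt_trans (by positivity) hv.1, hv.2.trans_lt (by linarith)⟩
  exact mt (measure_mono_null hsub) hpiece

theorem eventually_measure_Ioc_le (h : AsympScaleInvariant ν) (hq : q ∈ Ioo (0 : ℝ) 1)
    (hlam : 0 < lam) {C : ℝ} (hC : 1 < C) :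
    ∀ᶠ r in 𝓝[>] 0,
      ν (Ioc (q * (lam * r)) (lam * r)) ≤ ENNReal.ofReal C * ν (Ioc (q * r) r) := by
  filter_upwards [(h q hq lam hlam).eventually_ne one_ne_zero,
    (h q hq lam hlam).eventually_le_const hC] with r hne hle
  obtain ⟨hnum, hden⟩ := div_ne_zero_iff.1 hne
  have hden_pos : 0 < ν.real (Ioc (q * r) r) := measureReal_nonneg.lt_of_ne' hden
  rw [← ofReal_measureReal (ENNReal.toReal_ne_zero.1 hnum).2,
    ← ofReal_measureReal (ENNReal.toReal_ne_zero.1 hden).2, ← ENNReal.ofReal_mul (by positivity)]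
  exact ENNReal.ofReal_le_ofReal ((div_le_iff₀ hden_pos).1 hle)

theorem eventually_rpow_mul_normalizedMoment_le (h : AsympScaleInvariant ν) (hβ : 0 ≤ β)
    (hint : ∀ᶠ s in 𝓝[>] 0, IntegrableOn (fun v : ℝ => v ^ β) (Ioo 0 s) ν)
    (hq : q ∈ Ioo (0 : ℝ) 1) (hlam : 0 < lam) {C : ℝ} (hC : 1 < C) :
    ∀ᶠ s in 𝓝[>] 0,
      q ^ β * normalizedMoment ν β (lam * s) ≤ C * normalizedMoment ν β s := by
  obtain ⟨δ, hδ, hsub⟩ :=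
    mem_nhdsGT_iff_exists_Ioo_subset.1 (h.eventually_measure_Ioc_le hq hlam hC)
  filter_upwards [Ioo_mem_nhdsGT hδ, hint] with s hs hint_s
  rw [normalizedMoment_const_mul hs.1 hlam]
  refine rpow_mul_normalizedMoment_le hβ hq.1 hq.2 hs.1 (by positivity) hint_s fun r hr => ?_
  rw [Measure.map_apply (measurable_const_mul _) measurableSet_Ioc,
    preimage_const_mul_Ioc₀ _ _ (inv_pos.2 hlam), div_inv_eq_mul, div_inv_eq_mul, mul_assoc,
    mul_comm r]
  exact hsub ⟨hr.1, hr.2.trans hs.2⟩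

theorem slowlyVaryingAtZero_normalizedMoment (h : AsympScaleInvariant ν) (hβ : 0 < β)
    (hint : ∀ᶠ s in 𝓝[>] 0, IntegrableOn (fun v : ℝ => v ^ β) (Ioo 0 s) ν) :
    SlowlyVaryingAtZero (normalizedMoment ν β) := by
  refine slowlyVaryingAtZero_of_eventually_le ?_ fun lam hlam C hC => ?_
  · filter_upwards [self_mem_nhdsWithin, hint, h.eventually_measure_Ioo_ne_zero]
      with s hs hint_s hmass using normalizedMoment_pos hs hint_s hmass
  · have hroot : 1 < √C := Real.lt_sqrt_of_sq_lt (by linarith)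
    have hroot_inv : 0 < (√C)⁻¹ := by positivity
    -- The ratio `q` is chosen so that `q ^ β = (√C)⁻¹`.
    have hq : (√C)⁻¹ ^ β⁻¹ ∈ Ioo (0 : ℝ) 1 :=
      ⟨Real.rpow_pos_of_pos hroot_inv _,
        Real.rpow_lt_one hroot_inv.le (inv_lt_one_of_one_lt₀ hroot) (inv_pos.2 hβ)⟩
    filter_upwards [h.eventually_rpow_mul_normalizedMoment_le hβ.le hint hq hlam hroot] with s hs
    rwa [Real.rpow_inv_rpow hroot_inv.le hβ.ne', inv_mul_le_iff₀ (by positivity), ← mul_assoc,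
      Real.mul_self_sqrt (by linarith)] at hs

end AsympScaleInvariant

section Quantile

theorem quantileFun_le_iff (F : StieltjesFunction ℝ) {t : ℝ} (hne : ∃ y, t ≤ F y)
    (hbdd : BddBelow {y | t ≤ F y}) {x : ℝ} : quantileFun F t ≤ x ↔ t ≤ F x := by
  refine ⟨fun hx => ?_, fun hx => csInf_le hbdd hx⟩
  have hlim : Tendsto F (𝓝[>] x) (𝓝 (F x)) :=
    (F.right_continuous x).mono_left (nhdsWithin_mono _ Ioi_subset_Ici_self)
  refine ge_of_tendsto hlim ?_
  filter_upwards [self_mem_nhdsWithin] with y hy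
  obtain ⟨z, hz, hzy⟩ := exists_lt_of_csInf_lt hne (hx.trans_lt hy)
  exact le_trans hz (F.mono hzy.le)

variable (μ : Measure ℝ) [IsProbabilityMeasure μ]

theorem distFun_eq_cdf : distFun μ = ProbabilityTheory.cdf μ :=
  funext fun x => (ProbabilityTheory.cdf_eq_real μ x).symm

theorem monotone_distFun : Monotone (distFun μ) :=
  distFun_eq_cdf μ ▸ ProbabilityTheory.monotone_cdf μ

variable {μ}

theorem quantileFun_distFun_le_iff {t x : ℝ} (ht : t ∈ Ioo (0 : ℝ) 1) :
    quantileFun (distFun μ) t ≤ x ↔ t ≤ distFun μ x := by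
  rw [distFun_eq_cdf]
  have hne : ∃ y, t ≤ ProbabilityTheory.cdf μ y :=
    ((ProbabilityTheory.tendsto_cdf_atTop μ).eventually (eventually_ge_nhds ht.2)).exists
  obtain ⟨a, ha⟩ :=
    ((ProbabilityTheory.tendsto_cdf_atBot μ).eventually (eventually_lt_nhds ht.1)).exists
  have hbdd : BddBelow {y | t ≤ ProbabilityTheory.cdf μ y} :=
    ⟨a, fun y hy => ((ProbabilityTheory.monotone_cdf μ).reflect_lt (ha.trans_le hy)).le⟩
  exact quantileFun_le_iff _ hne hbdd

theorem monotoneOn_quantileFun_distFun : MonotoneOn (quantileFun (distFun μ)) (Ioo 0 1) :=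
  fun _ hs _ ht hst =>
    (quantileFun_distFun_le_iff hs).2 (hst.trans ((quantileFun_distFun_le_iff ht).1 le_rfl))

theorem dQ_Ico {s t : ℝ} (hs : s ∈ Ioo (0 : ℝ) 1) (ht : t ∈ Ioo (0 : ℝ) 1) :
    dQ μ (Ico s t)
      = ENNReal.ofReal (quantileFun (distFun μ) t - quantileFun (distFun μ) s) := by
  have hpre : distFun μ ⁻¹' Ico s t
      = Ico (quantileFun (distFun μ) s) (quantileFun (distFun μ) t) := by
    ext x
    rw [mem_preimage, mem_Ico, mem_Ico, quantileFun_distFun_le_iff hs, ← not_le, ← not_le,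
      quantileFun_distFun_le_iff ht]
  rw [dQ, Measure.map_apply (monotone_distFun μ).measurable measurableSet_Ico, hpre,
    Real.volume_Ico]

end Quantile

/-- The measure `dQ` seen from the endpoint `1`, i.e. its image under `u ↦ 1 - u`. -/
def reflectedDQ (μ : Measure ℝ) : Measure ℝ := (dQ μ).map fun u => 1 - u

section ReflectedDQ

variable {μ : Measure ℝ}

theorem cBeta_eq_normalizedMoment (s β : ℝ) :
    cBeta μ s β = normalizedMoment (reflectedDQ μ) β s := by
  rw [cBeta, normalizedMoment, reflectedDQ, (measurableEmbedding_subLeft _).setIntegral_map,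
    preimage_const_sub_Ioo, sub_zero]

theorem integrableOn_rpow_reflectedDQ_iff {s β : ℝ} :
    IntegrableOn (fun v : ℝ => v ^ β) (Ioo 0 s) (reflectedDQ μ) ↔
      IntegrableOn (fun u : ℝ => (1 - u) ^ β) (Ioo (1 - s) 1) (dQ μ) := by
  rw [reflectedDQ, (measurableEmbedding_subLeft _).integrableOn_map_iff,
    preimage_const_sub_Ioo, sub_zero]
  rfl

theorem reflectedDQ_real_Ioc [IsProbabilityMeasure μ] {a b : ℝ} (ha : 0 < a) (hab : a ≤ b)
    (hb : b < 1) :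
    (reflectedDQ μ).real (Ioc a b)
      = quantileFun (distFun μ) (1 - a) - quantileFun (distFun μ) (1 - b) := by
  have ha' : 1 - a ∈ Ioo (0 : ℝ) 1 := ⟨by linarith, by linarith⟩
  have hb' : 1 - b ∈ Ioo (0 : ℝ) 1 := ⟨by linarith, by linarith⟩
  rw [measureReal_def, reflectedDQ, Measure.map_apply (by fun_prop) measurableSet_Ioc,
    preimage_const_sub_Ioc, dQ_Ico hb' ha', ENNReal.toReal_ofReal]
  exact sub_nonneg.2 (monotoneOn_quantileFun_distFun hb' ha' (by linarith))

theorem asympScaleInvariant_reflectedDQ [IsProbabilityMeasure μ]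
    (hD : DeHaanGumbel (quantileFun (distFun μ))) : AsympScaleInvariant (reflectedDQ μ) := by
  rintro q ⟨hq0, hq1⟩ lam hlam
  have hlim := hD (q * lam) q lam 1 (by positivity) hq0 hlam one_pos hq1.ne
  rw [Real.log_mul hq0.ne' hlam.ne', add_sub_cancel_right, Real.log_one, sub_zero,
    div_self (Real.log_neg hq0 hq1).ne] at hlim
  refine hlim.congr' ?_
  have hsmall : ∀ᶠ r in 𝓝[>] (0 : ℝ), 0 < r ∧ r < 1 := Ioo_mem_nhdsGT one_pos
  filter_upwards [hsmall, eventually_nhdsGT_zero_mul_left hlam hsmall]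
    with r ⟨hr0, hr1⟩ ⟨hlr0, hlr1⟩
  rw [reflectedDQ_real_Ioc (mul_pos hq0 hlr0) (mul_le_of_le_one_left hlr0.le hq1.le) hlr1,
    reflectedDQ_real_Ioc (mul_pos hq0 hr0) (mul_le_of_le_one_left hr0.le hq1.le) hr1]
  ring_nf

end ReflectedDQ

/-- **Lemma 2.** If `F ∈ D(Λ)` then `s ↦ c(s,β)` is slowly varying at zero
for each `β > 0`. -/
theorem cBeta_slowly_varying
    (μ : Measure ℝ) [IsProbabilityMeasure μ] (F Q : ℝ → ℝ)
    (hF : F = distFun μ) (hQ : Q = quantileFun F)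
    (hD : DeHaanGumbel Q) (β : ℝ) (hβ : 0 < β)
    (hfin : ∀ᶠ s in nhdsWithin (0:ℝ) (Set.Ioi 0),
      IntegrableOn (fun u : ℝ => (1 - u) ^ β) (Set.Ioo (1 - s) 1) (dQ μ)) :
    ∀ lam : ℝ, 0 < lam →
      Tendsto (fun s : ℝ => cBeta μ (lam * s) β / cBeta μ s β)
        (nhdsWithin 0 (Set.Ioi 0)) (nhds 1) := by
  subst hF hQ
  have hint : ∀ᶠ s in 𝓝[>] 0, IntegrableOn (fun v : ℝ => v ^ β) (Ioo 0 s) (reflectedDQ μ) :=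
    hfin.mono fun _ => integrableOn_rpow_reflectedDQ_iff.2
  simp only [cBeta_eq_normalizedMoment]
  exact (asympScaleInvariant_reflectedDQ hD).slowlyVaryingAtZero_normalizedMoment hβ hint
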